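/- Let c > 0, let N ∈ ℕ, let T be a stopping time of the filtration (F_t) with T ≤ N almost surely, and let θ̂_T be any F_T-measurable [0,1]-valued random variable. Then c·E[T] + P(|θ̂_T − θ| > h) ≥ E[c·T + 𝒞_T(S_T)]. Moreover, equality holds when on each event {T = t, S_t = s} the estimator θ̂_T equals a maximizer over a ∈ [0,1] of ∫_{max(a−h,0)}^{min(a+h,1)} π_t(θ|s) dθ (the Bayes mid-point estimator). -/

import Mathlib

open MeasureTheory Set


/-- `m_t(s) = ∫_0^1 θ^s (1-θ)^(t-s) π(θ) dθ`. -/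
noncomputable def margLik (π : ℝ → ℝ) (t s : ℕ) : ℝ :=
  ∫ θ in Ioc (0:ℝ) 1, θ ^ s * (1 - θ) ^ (t - s) * π θ

/-- Posterior density `π_t(θ|s)`. -/
noncomputable def postDens (π : ℝ → ℝ) (t s : ℕ) (θ : ℝ) : ℝ :=
  θ ^ s * (1 - θ) ^ (t - s) * π θ / margLik π t s

/-- Posterior coverage of the interval `[a-h, a+h]` cropped to `[0,1]`. -/
noncomputable def covFn (h : ℝ) (π : ℝ → ℝ) (t s : ℕ) (a : ℝ) : ℝ :=
  ∫ θ in Ioc (max (a - h) 0) (min (a + h) 1), postDens π t s θ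

/-- Optimal conditional complementary coverage probability `𝒞_t(s)`. -/
noncomputable def Copt (h : ℝ) (π : ℝ → ℝ) (t s : ℕ) : ℝ :=
  1 - sSup (covFn h π t s '' Icc 0 1)

/-- Predictive probability `g_{t+1}(s) = m_{t+1}(s+1)/m_t(s)`. -/
noncomputable def gpred (π : ℝ → ℝ) (t s : ℕ) : ℝ :=
  margLik π (t + 1) (s + 1) / margLik π t s

/-- Number of successes among the trials `x`. -/
def cnt {N : ℕ} (x : Fin N → Bool) : ℕ :=
  (Finset.univ.filter (fun i : Fin N => x i)).card

/-- The joint (semi-Bayesian) law of `(θ, X₁, …, X_N)`: `θ` has density `π`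
on `[0,1]` and, conditionally on `θ`, the `Xᵢ` are i.i.d. Bernoulli(θ). -/
noncomputable def jointP (π : ℝ → ℝ) (N : ℕ) : Measure (ℝ × (Fin N → Bool)) :=
  ∑ x : Fin N → Bool,
    Measure.map (fun θ => (θ, x))
      ((volume.restrict (Ioc (0:ℝ) 1)).withDensity
        (fun θ => ENNReal.ofReal (θ ^ cnt x * (1 - θ) ^ (N - cnt x) * π θ)))

/-- Number of successes among the first `t` observations. -/
def St (N : ℕ) (t : ℕ) (ω : ℝ × (Fin N → Bool)) : ℕ :=
  (Finset.univ.filter (fun i : Fin N => (i : ℕ) < t ∧ ω.2 i)).card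

/-- The filtration generated by the first `t` observations. -/
def Ft (N : ℕ) (t : ℕ) : MeasurableSpace (ℝ × (Fin N → Bool)) :=
  MeasurableSpace.comap
    (fun ω : ℝ × (Fin N → Bool) => fun i : Fin N => if (i : ℕ) < t then ω.2 i else false) ⊤

/-!
A rule `(T, θ̂)` sees only the outcomes before time `T`, so it is constant on each stopped-prefix
cylinder, and these cylinders partition the outcome sequences. On one of them the Bernoulli
likelihoods of all continuations add up to the likelihood `θ ^ s * (1 - θ) ^ (t - s)` of the prefix,
so the expectation of any function of `θ` and the stopped data equals the expectation of its
posterior mean. For the indicator of `|θ̂ - θ| > h` that mean is one minus the posterior coverage of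
`θ̂`; it is at least `𝒞_T(S_T)`, with equality where `θ̂` maximizes the coverage.
-/

section ProductWeights

variable {ι κ R : Type*}

lemma prod_ite_const_eq_pow_mul_pow [CommMonoid R] (s : Finset ι) (p : ι → Prop)
    [DecidablePred p] (a b : R) :
    ∏ i ∈ s, (if p i then a else b) =
      a ^ (s.filter p).card * b ^ (s.card - (s.filter p).card) := by
  rw [Finset.prod_ite, Finset.prod_const, Finset.prod_const,
    ← Finset.card_filter_add_card_filter_not (s := s) p, Nat.add_sub_cancel_left]

lemma sum_prod_of_eqOn [Fintype ι] [Fintype κ] [CommSemiring R] {f : ι → κ → R} {s : Finset ι}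
    (hf : ∀ i ∉ s, ∑ b, f i b = 1) (x : ι → κ) {C : Finset (ι → κ)}
    (hC : ∀ y, y ∈ C ↔ ∀ i ∈ s, y i = x i) :
    ∑ y ∈ C, ∏ i, f i (y i) = ∏ i ∈ s, f i (x i) := by
  classical
  have hbox : C = Fintype.piFinset fun i => if i ∈ s then {x i} else Finset.univ := by
    ext y
    rw [hC, Fintype.mem_piFinset]
    refine forall_congr' fun i => ?_
    split_ifs with hi <;> simp [hi]
  have hfactor (i : ι) : ∑ b ∈ (if i ∈ s then {x i} else Finset.univ), f i b =
      if i ∈ s then f i (x i) else 1 := by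
    split_ifs with hi
    · exact Finset.sum_singleton _ _
    · exact hf i hi
  rw [hbox, ← Finset.prod_univ_sum]
  simp only [hfactor, Fintype.prod_ite_mem]

lemma sum_eq_sum_of_blocks {α M : Type*} [Fintype α] [AddCommMonoid M]
    {C : α → Finset α} (hC : ∀ x y, C y = C x ↔ y ∈ C x) {f g : α → M}
    (hfg : ∀ x, ∑ y ∈ C x, f y = ∑ y ∈ C x, g y) : ∑ x, f x = ∑ x, g x := by
  classical
  have hmaps : ∀ x ∈ (Finset.univ : Finset α), C x ∈ Finset.univ.image C := fun x hx =>
    Finset.mem_image_of_mem C hx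
  rw [← Finset.sum_fiberwise_of_maps_to hmaps f, ← Finset.sum_fiberwise_of_maps_to hmaps g]
  refine Finset.sum_congr rfl fun B hB => ?_
  obtain ⟨x, -, rfl⟩ := Finset.mem_image.1 hB
  simpa only [hC, Finset.filter_univ_mem] using hfg x

end ProductWeights

section StoppedPrefix

variable {N : ℕ}

/-- The outcome sequences that agree with `x` in the first `t` trials: the atom of `Ft N t` that
contains `x`. -/
def prefixCylinder (t : ℕ) (x : Fin N → Bool) : Finset (Fin N → Bool) :=
  {y | ∀ i : Fin N, (i : ℕ) < t → y i = x i}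

/-- `g` depends on the outcomes `x` only through the trials before time `τ x`. For a stopping time
`τ` this is `F_τ`-measurability, and `τ` is a stopping time when `DeterminedAt τ τ`. -/
def DeterminedAt {β : Type*} (τ : (Fin N → Bool) → ℕ) (g : (Fin N → Bool) → β) : Prop :=
  ∀ x, ∀ y ∈ prefixCylinder (τ x) x, g y = g x

lemma mem_prefixCylinder {t : ℕ} {x y : Fin N → Bool} :
    y ∈ prefixCylinder t x ↔ ∀ i : Fin N, (i : ℕ) < t → y i = x i := by
  simp only [prefixCylinder, Finset.mem_filter_univ]

lemma self_mem_prefixCylinder (t : ℕ) (x : Fin N → Bool) : x ∈ prefixCylinder t x :=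
  mem_prefixCylinder.2 fun _ _ => rfl

lemma prefixCylinder_eq_of_mem {t : ℕ} {x y : Fin N → Bool} (hy : y ∈ prefixCylinder t x) :
    prefixCylinder t y = prefixCylinder t x := by
  ext z
  simp only [mem_prefixCylinder] at hy ⊢
  exact forall₂_congr fun i hi => by rw [hy i hi]

lemma DeterminedAt.prefixCylinder_eq_iff {τ : (Fin N → Bool) → ℕ} (hτ : DeterminedAt τ τ)
    (x y : Fin N → Bool) :
    prefixCylinder (τ y) y = prefixCylinder (τ x) x ↔ y ∈ prefixCylinder (τ x) x := by
  refine ⟨fun h => h ▸ self_mem_prefixCylinder _ _, fun hy => ?_⟩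
  rw [hτ x y hy, prefixCylinder_eq_of_mem hy]

lemma mem_of_measurableSet_Ft {t : ℕ} {A : Set (ℝ × (Fin N → Bool))}
    (hA : MeasurableSet[Ft N t] A) {ω ω' : ℝ × (Fin N → Bool)}
    (h : ω'.2 ∈ prefixCylinder t ω.2) (hω : ω ∈ A) : ω' ∈ A := by
  obtain ⟨B, -, rfl⟩ := hA
  have hmask : (fun i : Fin N => if (i : ℕ) < t then ω'.2 i else false) =
      fun i : Fin N => if (i : ℕ) < t then ω.2 i else false :=
    funext fun i => if_ctx_congr Iff.rfl (mem_prefixCylinder.1 h i) fun _ => rfl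
  rwa [mem_preimage, hmask]

lemma exists_determinedAt_comp_snd {T : ℝ × (Fin N → Bool) → ℕ}
    (hT : ∀ t, MeasurableSet[Ft N t] {ω | T ω = t}) {β : Type*} [MeasurableSpace β]
    [MeasurableSingletonClass β] {g : ℝ × (Fin N → Bool) → β}
    (hg : ∀ t, ∀ B : Set β, MeasurableSet B →
      MeasurableSet[Ft N t] ({ω | g ω ∈ B} ∩ {ω | T ω = t})) :
    ∃ τ a, T = (fun ω => τ ω.2) ∧ g = (fun ω => a ω.2) ∧
      DeterminedAt τ τ ∧ DeterminedAt τ a := by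
  have hT_eq {ω ω' : ℝ × (Fin N → Bool)} (h : ω'.2 ∈ prefixCylinder (T ω) ω.2) : T ω' = T ω :=
    mem_of_measurableSet_Ft (hT (T ω)) h rfl
  have hg_eq {ω ω' : ℝ × (Fin N → Bool)} (h : ω'.2 ∈ prefixCylinder (T ω) ω.2) : g ω' = g ω :=
    (mem_of_measurableSet_Ft (hg (T ω) {g ω} (measurableSet_singleton _)) h ⟨rfl, rfl⟩).1
  exact ⟨fun x => T (0, x), fun x => g (0, x),
    funext fun ω => hT_eq (ω := (0, ω.2)) (self_mem_prefixCylinder _ _),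
    funext fun ω => hg_eq (ω := (0, ω.2)) (self_mem_prefixCylinder _ _),
    fun _ _ h => hT_eq h, fun _ _ h => hg_eq h⟩

lemma St_congr {t : ℕ} {ω ω' : ℝ × (Fin N → Bool)} (h : ω'.2 ∈ prefixCylinder t ω.2) :
    St N t ω' = St N t ω := by
  refine congrArg Finset.card (Finset.filter_congr fun i _ => and_congr_right fun hi => ?_)
  rw [mem_prefixCylinder.1 h i hi]

lemma sum_prefixCylinder_likelihood {R : Type*} [CommRing R] {t : ℕ} (ht : t ≤ N)
    (ω : ℝ × (Fin N → Bool)) (θ : R) :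
    ∑ y ∈ prefixCylinder t ω.2, θ ^ cnt y * (1 - θ) ^ (N - cnt y) =
      θ ^ St N t ω * (1 - θ) ^ (t - St N t ω) := by
  have hlik (y : Fin N → Bool) :
      θ ^ cnt y * (1 - θ) ^ (N - cnt y) = ∏ i, if y i then θ else 1 - θ := by
    rw [prod_ite_const_eq_pow_mul_pow, Finset.card_univ, Fintype.card_fin, cnt]
  have hcyl (y : Fin N → Bool) : y ∈ prefixCylinder t ω.2 ↔
      ∀ i ∈ ({i : Fin N | (i : ℕ) < t} : Finset (Fin N)), y i = ω.2 i := by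
    simp only [mem_prefixCylinder, Finset.mem_filter_univ]
  have hcard : ({i : Fin N | (i : ℕ) < t} : Finset (Fin N)).card = t := by
    rw [Fin.card_filter_val_lt, min_eq_right ht]
  have hbernoulli : ∑ b : Bool, (if b then θ else 1 - θ) = 1 := by
    simp only [Fintype.sum_bool, if_true, Bool.false_eq_true, if_false, add_sub_cancel]
  simp only [hlik]
  rw [sum_prod_of_eqOn (f := fun (_ : Fin N) (b : Bool) => if b then θ else 1 - θ)
    (fun _ _ => hbernoulli) ω.2 hcyl, prod_ite_const_eq_pow_mul_pow, hcard, Finset.filter_filter,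
    St]

end StoppedPrefix

section JointDensity

/-- The joint density of `θ` and of one particular outcome sequence of length `t` with `s`
successes, that is, the unnormalised posterior density. -/
noncomputable def jointDens (π : ℝ → ℝ) (t s : ℕ) (θ : ℝ) : ℝ :=
  θ ^ s * (1 - θ) ^ (t - s) * π θ

variable {π : ℝ → ℝ} {N : ℕ}

lemma margLik_eq_setIntegral_jointDens (π : ℝ → ℝ) (t s : ℕ) :
    margLik π t s = ∫ θ in Ioc (0 : ℝ) 1, jointDens π t s θ := rfl

lemma postDens_eq_div (π : ℝ → ℝ) (t s : ℕ) (θ : ℝ) :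
    postDens π t s θ = jointDens π t s θ / margLik π t s := rfl

lemma sum_prefixCylinder_jointDens {t : ℕ} (ht : t ≤ N) (ω : ℝ × (Fin N → Bool)) (θ : ℝ) :
    ∑ y ∈ prefixCylinder t ω.2, jointDens π N (cnt y) θ = jointDens π t (St N t ω) θ := by
  simp only [jointDens]
  rw [← Finset.sum_mul, sum_prefixCylinder_likelihood ht]

lemma jointDens_nonneg (hπ0 : 0 ≤ᵐ[volume.restrict (Ioc (0 : ℝ) 1)] π) (t s : ℕ) :
    0 ≤ᵐ[volume.restrict (Ioc (0 : ℝ) 1)] jointDens π t s := by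
  filter_upwards [hπ0, ae_restrict_mem measurableSet_Ioc] with θ hπθ hθ
  exact mul_nonneg (mul_nonneg (pow_nonneg hθ.1.le _) (pow_nonneg (sub_nonneg.2 hθ.2) _)) hπθ

lemma integrableOn_jointDens (hπ : IntegrableOn π (Ioc (0 : ℝ) 1)) (t s : ℕ) :
    IntegrableOn (jointDens π t s) (Ioc (0 : ℝ) 1) := by
  refine hπ.bdd_mul (c := 1) (by fun_prop) ?_
  filter_upwards [ae_restrict_mem measurableSet_Ioc] with θ hθ
  have h1θ : 0 ≤ 1 - θ := sub_nonneg.2 hθ.2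
  rw [Real.norm_of_nonneg (mul_nonneg (pow_nonneg hθ.1.le _) (pow_nonneg h1θ _))]
  exact mul_le_one₀ (pow_le_one₀ hθ.1.le hθ.2) (pow_nonneg h1θ _)
    (pow_le_one₀ h1θ (sub_le_self _ hθ.1.le))

lemma aemeasurable_jointDens {μ : Measure ℝ} (hπ : AEMeasurable π μ) (t s : ℕ) :
    AEMeasurable (jointDens π t s) μ := by
  unfold jointDens
  fun_prop

lemma margLik_pos (hπ0 : 0 ≤ᵐ[volume.restrict (Ioc (0 : ℝ) 1)] π)
    (hπ : ∫ θ in Ioc (0 : ℝ) 1, π θ ≠ 0) (t s : ℕ) : 0 < margLik π t s := by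
  have hnonneg := jointDens_nonneg hπ0 t s
  refine (integral_nonneg_of_ae hnonneg).lt_of_ne' fun hzero => hπ (integral_eq_zero_of_ae ?_)
  have hdens := (integral_eq_zero_iff_of_nonneg_ae hnonneg
    (integrableOn_jointDens (.of_integral_ne_zero hπ) t s)).1 hzero
  filter_upwards [hdens, ae_restrict_mem measurableSet_Ioc,
    ae_restrict_of_ae (Measure.ae_ne volume 1)] with θ hθ hmem hne
  have hlt : 0 < 1 - θ := sub_pos.2 (hmem.2.lt_of_ne hne)
  exact (mul_eq_zero.1 hθ).resolve_left (mul_pos (pow_pos hmem.1 _) (pow_pos hlt _)).ne'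

lemma sum_prefixCylinder_margLik (hπ : IntegrableOn π (Ioc (0 : ℝ) 1)) {t : ℕ} (ht : t ≤ N)
    (ω : ℝ × (Fin N → Bool)) :
    ∑ y ∈ prefixCylinder t ω.2, margLik π N (cnt y) = margLik π t (St N t ω) := by
  simp only [margLik_eq_setIntegral_jointDens]
  rw [← integral_finsetSum _ fun y _ => integrableOn_jointDens hπ N (cnt y)]
  simp only [sum_prefixCylinder_jointDens ht]

end JointDensity

section WithDensity

variable {α E : Type*} [MeasurableSpace α] {μ : Measure α} {w : α → ℝ} [NormedAddCommGroup E]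
  [NormedSpace ℝ E] {f : α → E}

lemma integrable_withDensity_ofReal_iff (hw0 : 0 ≤ᵐ[μ] w) (hw : AEMeasurable w μ) :
    Integrable f (μ.withDensity fun x => ENNReal.ofReal (w x)) ↔
      Integrable (fun x => w x • f x) μ := by
  rw [integrable_withDensity_iff_integrable_smul₀' hw.ennreal_ofReal
    (ae_of_all _ fun _ => ENNReal.ofReal_lt_top)]
  refine integrable_congr ?_
  filter_upwards [hw0] with x hx
  rw [ENNReal.toReal_ofReal hx]

lemma integral_withDensity_ofReal (hw0 : 0 ≤ᵐ[μ] w) (hw : AEMeasurable w μ) :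
    ∫ x, f x ∂μ.withDensity (fun x => ENNReal.ofReal (w x)) = ∫ x, w x • f x ∂μ := by
  rw [integral_withDensity_eq_integral_toReal_smul₀ hw.ennreal_ofReal
    (ae_of_all _ fun _ => ENNReal.ofReal_lt_top)]
  refine integral_congr_ae ?_
  filter_upwards [hw0] with x hx
  rw [ENNReal.toReal_ofReal hx]

end WithDensity

section JointLaw

variable {π : ℝ → ℝ} {N : ℕ} {E : Type*} [NormedAddCommGroup E]

lemma jointP_eq_sum_map (π : ℝ → ℝ) (N : ℕ) :
    jointP π N = ∑ x : Fin N → Bool, ((volume.restrict (Ioc (0 : ℝ) 1)).withDensity fun θ =>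
      ENNReal.ofReal (jointDens π N (cnt x) θ)).map fun θ => (θ, x) := rfl

lemma integrable_jointP_iff [NormedSpace ℝ E]
    (hπ0 : 0 ≤ᵐ[volume.restrict (Ioc (0 : ℝ) 1)] π)
    (hπ : AEMeasurable π (volume.restrict (Ioc (0 : ℝ) 1))) {f : ℝ × (Fin N → Bool) → E} :
    Integrable f (jointP π N) ↔
      ∀ x, IntegrableOn (fun θ => jointDens π N (cnt x) θ • f (θ, x)) (Ioc 0 1) := by
  simp only [jointP_eq_sum_map, integrable_finsetSum_measure, Finset.mem_univ, forall_const,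
    (measurableEmbedding_prod_mk_right _).integrable_map_iff]
  exact forall_congr' fun x => integrable_withDensity_ofReal_iff (jointDens_nonneg hπ0 N (cnt x))
    (aemeasurable_jointDens hπ N (cnt x))

lemma integral_jointP [NormedSpace ℝ E]
    (hπ0 : 0 ≤ᵐ[volume.restrict (Ioc (0 : ℝ) 1)] π)
    (hπ : AEMeasurable π (volume.restrict (Ioc (0 : ℝ) 1))) {f : ℝ × (Fin N → Bool) → E}
    (hf : Integrable f (jointP π N)) :
    ∫ ω, f ω ∂jointP π N =
      ∑ x, ∫ θ in Ioc (0 : ℝ) 1, jointDens π N (cnt x) θ • f (θ, x) := by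
  rw [jointP_eq_sum_map] at hf ⊢
  rw [integral_finsetSum_measure (integrable_finsetSum_measure.1 hf)]
  refine Finset.sum_congr rfl fun x _ => ?_
  rw [(measurableEmbedding_prod_mk_right x).integral_map, integral_withDensity_ofReal
    (jointDens_nonneg hπ0 N (cnt x)) (aemeasurable_jointDens hπ N (cnt x))]

lemma isFiniteMeasure_jointP (hπ0 : 0 ≤ᵐ[volume.restrict (Ioc (0 : ℝ) 1)] π)
    (hπ : IntegrableOn π (Ioc (0 : ℝ) 1)) (N : ℕ) : IsFiniteMeasure (jointP π N) := by
  refine (integrable_const_iff_isFiniteMeasure (one_ne_zero (α := ℝ))).1 ?_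
  rw [integrable_jointP_iff hπ0 hπ.aemeasurable]
  exact fun x => (integrableOn_jointDens hπ N (cnt x)).smul_const 1

lemma integrable_comp_snd_jointP (hπ0 : 0 ≤ᵐ[volume.restrict (Ioc (0 : ℝ) 1)] π)
    (hπ : IntegrableOn π (Ioc (0 : ℝ) 1)) (g : (Fin N → Bool) → E) :
    Integrable (fun ω => g ω.2) (jointP π N) :=
  have := isFiniteMeasure_jointP hπ0 hπ N
  (Integrable.of_finite (f := g)).comp_measurable measurable_snd

lemma integral_comp_snd_jointP [NormedSpace ℝ E] [CompleteSpace E]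
    (hπ0 : 0 ≤ᵐ[volume.restrict (Ioc (0 : ℝ) 1)] π)
    (hπ : IntegrableOn π (Ioc (0 : ℝ) 1)) (g : (Fin N → Bool) → E) :
    ∫ ω, g ω.2 ∂jointP π N = ∑ x, margLik π N (cnt x) • g x := by
  rw [integral_jointP hπ0 hπ.aemeasurable (integrable_comp_snd_jointP hπ0 hπ g)]
  simp only [integral_smul_const, margLik_eq_setIntegral_jointDens]

lemma forall_of_ae_jointP (hπ0 : 0 ≤ᵐ[volume.restrict (Ioc (0 : ℝ) 1)] π)
    (hπ : ∫ θ in Ioc (0 : ℝ) 1, π θ ≠ 0) {p : (Fin N → Bool) → Prop}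
    (hp : ∀ᵐ ω ∂jointP π N, p ω.2) (x : Fin N → Bool) : p x := by
  by_contra hx
  have hint : ∫ ω, (Pi.single x 1 : (Fin N → Bool) → ℝ) ω.2 ∂jointP π N = 0 :=
    integral_eq_zero_of_ae <| hp.mono fun ω hω =>
      Pi.single_eq_of_ne (fun h : ω.2 = x => hx (h ▸ hω)) 1
  rw [integral_comp_snd_jointP hπ0 (.of_integral_ne_zero hπ)] at hint
  simp only [Pi.single_apply, smul_eq_mul, mul_ite, mul_one, mul_zero, Finset.sum_ite_eq',
    Finset.mem_univ, if_true] at hint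
  exact (margLik_pos hπ0 hπ N (cnt x)).ne' hint

end JointLaw

section Posterior

variable {π : ℝ → ℝ} {N : ℕ}

lemma margLik_smul_integral_postDens_smul {E : Type*} [NormedAddCommGroup E] [NormedSpace ℝ E]
    {t s : ℕ} (hm : margLik π t s ≠ 0) (μ : Measure ℝ) (g : ℝ → E) :
    margLik π t s • ∫ θ, postDens π t s θ • g θ ∂μ = ∫ θ, jointDens π t s θ • g θ ∂μ := by
  rw [← integral_smul]
  simp only [smul_smul, postDens_eq_div, mul_div_cancel₀ _ hm]

lemma integral_jointP_eq_integral_posterior {E : Type*} [NormedAddCommGroup E] [NormedSpace ℝ E]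
    [CompleteSpace E] (hπ0 : 0 ≤ᵐ[volume.restrict (Ioc (0 : ℝ) 1)] π)
    (hπ : ∫ θ in Ioc (0 : ℝ) 1, π θ ≠ 0) {τ : (Fin N → Bool) → ℕ} (hτ : DeterminedAt τ τ)
    (hτN : ∀ x, τ x ≤ N) {f : ℝ × (Fin N → Bool) → E} (hf : Integrable f (jointP π N))
    (hfτ : DeterminedAt τ fun x θ => f (θ, x)) :
    ∫ ω, f ω ∂jointP π N = ∫ ω, (∫ θ in Ioc (0 : ℝ) 1,
      postDens π (τ ω.2) (St N (τ ω.2) ω) θ • f (θ, ω.2)) ∂jointP π N := by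
  have hint : IntegrableOn π (Ioc (0 : ℝ) 1) := .of_integral_ne_zero hπ
  -- `St` ignores the `θ`-coordinate, so `0` is a dummy.
  let s (x : Fin N → Bool) : ℕ := St N (τ x) (0, x)
  let Φ (x : Fin N → Bool) : E :=
    ∫ θ in Ioc (0 : ℝ) 1, postDens π (τ x) (s x) θ • f (θ, x)
  have hΦ : DeterminedAt τ Φ := by
    intro x y hy
    have hs : s y = s x := by
      simp only [s, hτ x y hy]
      exact St_congr hy
    simp only [Φ, hs, hτ x y hy, congrFun (hfτ x y hy)]
  refine Eq.trans ?_ (integral_comp_snd_jointP hπ0 hint Φ).symm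
  rw [integral_jointP hπ0 hint.aemeasurable hf]
  refine sum_eq_sum_of_blocks hτ.prefixCylinder_eq_iff fun x => ?_
  have hint_f (y : Fin N → Bool) (hy : y ∈ prefixCylinder (τ x) x) :
      IntegrableOn (fun θ => jointDens π N (cnt y) θ • f (θ, x)) (Ioc 0 1) := by
    simpa only [congrFun (hfτ x y hy)] using (integrable_jointP_iff hπ0 hint.aemeasurable).1 hf y
  calc ∑ y ∈ prefixCylinder (τ x) x, ∫ θ in Ioc (0 : ℝ) 1, jointDens π N (cnt y) θ • f (θ, y)
      = ∑ y ∈ prefixCylinder (τ x) x, ∫ θ in Ioc (0 : ℝ) 1, jointDens π N (cnt y) θ • f (θ, x) :=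
        Finset.sum_congr rfl fun y hy => by simp only [congrFun (hfτ x y hy)]
    _ = ∫ θ in Ioc (0 : ℝ) 1, jointDens π (τ x) (s x) θ • f (θ, x) := by
        rw [← integral_finsetSum _ hint_f]
        simp only [← Finset.sum_smul, sum_prefixCylinder_jointDens (hτN x) (0, x), s]
    _ = margLik π (τ x) (s x) • Φ x :=
        (margLik_smul_integral_postDens_smul (margLik_pos hπ0 hπ _ _).ne' _ _).symm
    _ = ∑ y ∈ prefixCylinder (τ x) x, margLik π N (cnt y) • Φ x := by
        rw [← Finset.sum_smul, sum_prefixCylinder_margLik hint (hτN x) (0, x)]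
    _ = ∑ y ∈ prefixCylinder (τ x) x, margLik π N (cnt y) • Φ y :=
        Finset.sum_congr rfl fun y hy => by rw [hΦ x y hy]

end Posterior

section Coverage

variable {π : ℝ → ℝ} {N : ℕ}

lemma setIntegral_postDens_miss (hπ0 : 0 ≤ᵐ[volume.restrict (Ioc (0 : ℝ) 1)] π)
    (hπ : ∫ θ in Ioc (0 : ℝ) 1, π θ ≠ 0) (h : ℝ) (t s : ℕ) (a : ℝ) :
    ∫ θ in Ioc (0 : ℝ) 1 ∩ {θ | h < |a - θ|}, postDens π t s θ = 1 - covFn h π t s a := by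
  have hmass : ∫ θ in Ioc (0 : ℝ) 1, postDens π t s θ = 1 := by
    simp only [postDens_eq_div, integral_div, ← margLik_eq_setIntegral_jointDens]
    exact div_self (margLik_pos hπ0 hπ t s).ne'
  have hint : IntegrableOn (postDens π t s) (Ioc 0 1) :=
    (integrableOn_jointDens (.of_integral_ne_zero hπ) t s).div_const _
  have hmiss : {θ | h < |a - θ|} = (Icc (a - h) (a + h))ᶜ := by
    ext θ
    rw [mem_ofPred_eq, mem_compl_iff, ← Real.closedBall_eq_Icc, Metric.mem_closedBall, not_le,
      dist_comm, Real.dist_eq]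
  have hsets : (Ioc (0 : ℝ) 1 ∩ {θ | h < |a - θ|} : Set ℝ) =ᵐ[volume]
      (Ioc (0 : ℝ) 1 \ Ioc (a - h) (a + h) : Set ℝ) := by
    rw [hmiss, ← sdiff_eq]
    exact (ae_eq_refl _).diff Ioc_ae_eq_Icc.symm
  have hcov : Ioc (max (a - h) 0) (min (a + h) 1) = Ioc 0 1 ∩ Ioc (a - h) (a + h) := by
    rw [inter_comm, Ioc_inter_Ioc]
  rw [setIntegral_congr_set hsets, ← sdiff_self_inter, setIntegral_sdiff
    (measurableSet_Ioc.inter measurableSet_Ioc) hint inter_subset_left, hmass, covFn, hcov]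

lemma covFn_le_one (hπ0 : 0 ≤ᵐ[volume.restrict (Ioc (0 : ℝ) 1)] π)
    (hπ : ∫ θ in Ioc (0 : ℝ) 1, π θ ≠ 0) (h : ℝ) (t s : ℕ) (a : ℝ) : covFn h π t s a ≤ 1 := by
  rw [← sub_nonneg, ← setIntegral_postDens_miss hπ0 hπ]
  refine integral_nonneg_of_ae (ae_restrict_of_ae_restrict_of_subset inter_subset_left ?_)
  filter_upwards [jointDens_nonneg hπ0 t s] with θ hθ
  exact div_nonneg hθ (margLik_pos hπ0 hπ t s).le

lemma Copt_le_one_sub_covFn (hπ0 : 0 ≤ᵐ[volume.restrict (Ioc (0 : ℝ) 1)] π)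
    (hπ : ∫ θ in Ioc (0 : ℝ) 1, π θ ≠ 0) (h : ℝ) (t s : ℕ) {a : ℝ} (ha : a ∈ Icc (0 : ℝ) 1) :
    Copt h π t s ≤ 1 - covFn h π t s a :=
  sub_le_sub_left (le_csSup ⟨1, forall_mem_image.2 fun b _ => covFn_le_one hπ0 hπ h t s b⟩
    (mem_image_of_mem _ ha)) 1

lemma Copt_eq_one_sub_covFn_of_isMaxOn {h : ℝ} {t s : ℕ} {a : ℝ} (ha : a ∈ Icc (0 : ℝ) 1)
    (hmax : IsMaxOn (covFn h π t s) (Icc 0 1) a) : Copt h π t s = 1 - covFn h π t s a := by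
  have hgreatest : IsGreatest (covFn h π t s '' Icc 0 1) (covFn h π t s a) :=
    ⟨mem_image_of_mem _ ha, forall_mem_image.2 fun _ hb => hmax hb⟩
  rw [Copt, hgreatest.csSup_eq]

lemma measureReal_jointP_miss (hπ0 : 0 ≤ᵐ[volume.restrict (Ioc (0 : ℝ) 1)] π)
    (hπ : ∫ θ in Ioc (0 : ℝ) 1, π θ ≠ 0) (h : ℝ) {τ : (Fin N → Bool) → ℕ}
    (hτ : DeterminedAt τ τ) (hτN : ∀ x, τ x ≤ N) {a : (Fin N → Bool) → ℝ}
    (ha : DeterminedAt τ a) :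
    (jointP π N).real {ω | h < |a ω.2 - ω.1|} =
      ∫ ω, (1 - covFn h π (τ ω.2) (St N (τ ω.2) ω) (a ω.2)) ∂jointP π N := by
  have := isFiniteMeasure_jointP hπ0 (.of_integral_ne_zero hπ) N
  have ha_meas : Measurable fun ω : ℝ × (Fin N → Bool) => a ω.2 :=
    (measurable_of_countable a).comp measurable_snd
  let miss : Set (ℝ × (Fin N → Bool)) := {ω | h < |a ω.2 - ω.1|}
  have hmeas : MeasurableSet miss :=
    measurableSet_lt measurable_const (ha_meas.sub measurable_fst).abs
  have hmiss : DeterminedAt τ fun x θ =>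
      miss.indicator (1 : ℝ × (Fin N → Bool) → ℝ) (θ, x) := by
    intro x y hy
    simp only [indicator_apply, miss, mem_ofPred_eq, Pi.one_apply, ha x y hy]
  have hcond (ω : ℝ × (Fin N → Bool)) :
      ∫ θ in Ioc (0 : ℝ) 1, postDens π (τ ω.2) (St N (τ ω.2) ω) θ •
        miss.indicator (1 : ℝ × (Fin N → Bool) → ℝ) (θ, ω.2) =
      1 - covFn h π (τ ω.2) (St N (τ ω.2) ω) (a ω.2) := by
    rw [← setIntegral_postDens_miss hπ0 hπ, ← setIntegral_indicator
      (measurableSet_lt measurable_const (by fun_prop))]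
    simp only [indicator_apply, miss, mem_ofPred_eq, Pi.one_apply, smul_eq_mul, mul_ite, mul_one,
      mul_zero]
  have hmiss_int : Integrable (miss.indicator (1 : ℝ × (Fin N → Bool) → ℝ)) (jointP π N) :=
    (integrable_const (1 : ℝ)).indicator hmeas
  rw [← integral_indicator_one hmeas,
    integral_jointP_eq_integral_posterior hπ0 hπ hτ hτN hmiss_int hmiss]
  simp only [hcond]

lemma lagrangian_cost_eq_integral (hπ0 : 0 ≤ᵐ[volume.restrict (Ioc (0 : ℝ) 1)] π)
    (hπ : ∫ θ in Ioc (0 : ℝ) 1, π θ ≠ 0) (h c : ℝ) {τ : (Fin N → Bool) → ℕ}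
    (hτ : DeterminedAt τ τ) (hτN : ∀ x, τ x ≤ N) {a : (Fin N → Bool) → ℝ}
    (ha : DeterminedAt τ a) :
    c * (∫ ω, (τ ω.2 : ℝ) ∂jointP π N) + (jointP π N).real {ω | h < |a ω.2 - ω.1|} =
      ∫ ω, (c * τ ω.2 + (1 - covFn h π (τ ω.2) (St N (τ ω.2) ω) (a ω.2))) ∂jointP π N := by
  have hint (g : (Fin N → Bool) → ℝ) : Integrable (fun ω => g ω.2) (jointP π N) :=
    integrable_comp_snd_jointP hπ0 (.of_integral_ne_zero hπ) g
  rw [measureReal_jointP_miss hπ0 hπ h hτ hτN ha, ← integral_const_mul]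
  exact (integral_add (hint fun x => c * τ x)
    (hint fun x => 1 - covFn h π (τ x) (St N (τ x) (0, x)) (a x))).symm

end Coverage

theorem lagrangian_cost_lower_bound_general (h c : ℝ) {π : ℝ → ℝ}
    (hπ0 : 0 ≤ᵐ[volume.restrict (Ioc (0 : ℝ) 1)] π) (hπ1 : ∫ θ in (0 : ℝ)..1, π θ = 1) {N : ℕ}
    {T : ℝ × (Fin N → Bool) → ℕ} (hTN : ∀ᵐ ω ∂jointP π N, T ω ≤ N)
    (hTstop : ∀ t : ℕ, MeasurableSet[Ft N t] {ω | T ω = t})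
    {θhat : ℝ × (Fin N → Bool) → ℝ} (hθhat01 : ∀ ω, θhat ω ∈ Icc (0 : ℝ) 1)
    (hθhatFT : ∀ t : ℕ, ∀ B : Set ℝ, MeasurableSet B →
      MeasurableSet[Ft N t] ({ω | θhat ω ∈ B} ∩ {ω | T ω = t})) :
    (c * (∫ ω, (T ω : ℝ) ∂jointP π N) + (jointP π N).real {ω | |θhat ω - ω.1| > h} ≥
      ∫ ω, (c * T ω + Copt h π (T ω) (St N (T ω) ω)) ∂jointP π N) ∧
    ((∀ ω, IsMaxOn (covFn h π (T ω) (St N (T ω) ω)) (Icc 0 1) (θhat ω)) →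
      c * (∫ ω, (T ω : ℝ) ∂jointP π N) + (jointP π N).real {ω | |θhat ω - ω.1| > h} =
        ∫ ω, (c * T ω + Copt h π (T ω) (St N (T ω) ω)) ∂jointP π N) := by
  obtain ⟨τ, a, rfl, rfl, hτ, ha⟩ := exists_determinedAt_comp_snd hTstop hθhatFT
  have hπ : ∫ θ in Ioc (0 : ℝ) 1, π θ ≠ 0 := by
    rw [← intervalIntegral.integral_of_le zero_le_one, hπ1]
    exact one_ne_zero
  have hint (g : (Fin N → Bool) → ℝ) : Integrable (fun ω => g ω.2) (jointP π N) :=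
    integrable_comp_snd_jointP hπ0 (.of_integral_ne_zero hπ) g
  simp only [gt_iff_lt]
  rw [lagrangian_cost_eq_integral hπ0 hπ h c hτ (forall_of_ae_jointP hπ0 hπ hTN) ha]
  refine ⟨integral_mono (hint fun x => c * τ x + Copt h π (τ x) (St N (τ x) (0, x)))
    (hint fun x => c * τ x + (1 - covFn h π (τ x) (St N (τ x) (0, x)) (a x)))
    fun ω => add_le_add_right (Copt_le_one_sub_covFn hπ0 hπ h _ _ (hθhat01 ω)) _,
    fun hmax => integral_congr_ae (.of_forall fun ω => ?_)⟩
  simp only [Copt_eq_one_sub_covFn_of_isMaxOn (hθhat01 ω) (hmax ω)]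

/-- lower bound on the Lagrangian cost of any pair
`(T, θ̂_T)` of a bounded stopping time and an `F_T`-measurable mid-point
estimator, with equality when `θ̂_T` is the Bayes mid-point estimator. -/
theorem lagrangian_cost_lower_bound (h c : ℝ) (hh : 0 < h ∧ h < 1 / 2) (hc : 0 < c)
    (π : ℝ → ℝ) (hπmeas : Measurable π) (hπ0 : ∀ θ, 0 ≤ π θ)
    (hπ1 : (∫ θ in (0:ℝ)..1, π θ) = 1) (N : ℕ)
    (T : ℝ × (Fin N → Bool) → ℕ)
    (hTN : ∀ᵐ ω ∂(jointP π N), T ω ≤ N)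
    (hTstop : ∀ t : ℕ, MeasurableSet[Ft N t] {ω | T ω = t})
    (θhat : ℝ × (Fin N → Bool) → ℝ)
    (hθhat01 : ∀ ω, θhat ω ∈ Icc (0:ℝ) 1)
    (hθhatFT : ∀ t : ℕ, ∀ B : Set ℝ, MeasurableSet B →
      MeasurableSet[Ft N t] ({ω | θhat ω ∈ B} ∩ {ω | T ω = t})) :
    (c * (∫ ω, (T ω : ℝ) ∂(jointP π N))
        + ((jointP π N) {ω | |θhat ω - ω.1| > h}).toReal
      ≥ ∫ ω, (c * (T ω : ℝ) + Copt h π (T ω) (St N (T ω) ω)) ∂(jointP π N)) ∧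
    ((∀ ω, ∀ a ∈ Icc (0:ℝ) 1,
        covFn h π (T ω) (St N (T ω) ω) a ≤ covFn h π (T ω) (St N (T ω) ω) (θhat ω)) →
      c * (∫ ω, (T ω : ℝ) ∂(jointP π N))
          + ((jointP π N) {ω | |θhat ω - ω.1| > h}).toReal
        = ∫ ω, (c * (T ω : ℝ) + Copt h π (T ω) (St N (T ω) ω)) ∂(jointP π N)) :=
  lagrangian_cost_lower_bound_general h c (.of_forall hπ0) hπ1 hTN hTstop hθhat01
    hθhatFT
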